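/- Let F be an algebraically closed field with characteristic ≠ 2 and ≠ 3. Then the derivation algebra of the algebra E2(0) with MSC [[1,0,0,0],[1,0,0,0]] is Der(E2(0)) = { [[0,0],[t,-t]] : t ∈ F }. -/

import Mathlib

open Matrix Kronecker

variable {F : Type*}

/-- The Kronecker (tensor) product of two `2 × 2` matrices, realized as a `4 × 4` matrix;
rows/columns are indexed in row-major order by the pairs `(1,1), (1,2), (2,1), (2,2)`. -/
def kron [CommRing F] (g h : Matrix (Fin 2) (Fin 2) F) : Matrix (Fin 4) (Fin 4) F :=
  Matrix.reindex finProdFinEquiv finProdFinEquiv (g ⊗ₖ h)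

/-- Two `2`-dimensional algebras given by matrices of structure constants `A, B`
are isomorphic iff `B = g · A · (g⁻¹ ⊗ g⁻¹)` for some `g ∈ GL(2, F)`. -/
def Isomorphic [Field F] (A B : Matrix (Fin 2) (Fin 4) F) : Prop :=
  ∃ g : GL (Fin 2) F,
    B = (g : Matrix (Fin 2) (Fin 2) F) * A *
        kron ((↑(g⁻¹) : Matrix (Fin 2) (Fin 2) F)) ((↑(g⁻¹) : Matrix (Fin 2) (Fin 2) F))

/-- The automorphism group of the algebra with MSC `E`, as a set of (invertible) `2 × 2`
matrices: `Aut(E) = {g ∈ GL(2,F) : g·E = E·(g ⊗ g)}`. -/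
def Aut [Field F] (E : Matrix (Fin 2) (Fin 4) F) : Set (Matrix (Fin 2) (Fin 2) F) :=
  {g | IsUnit g ∧ g * E = E * kron g g}

/-- The derivation algebra of the algebra with MSC `E`:
`Der(E) = { D : E·(D ⊗ I + I ⊗ D) = D·E }`. -/
def Der [Field F] (E : Matrix (Fin 2) (Fin 4) F) : Set (Matrix (Fin 2) (Fin 2) F) :=
  {D | E * (kron D 1 + kron 1 D) = D * E}

/-!
A matrix `D` lies in `Der E` exactly when it satisfies the Leibniz rule for the product
`u · v = E (u ⊗ v)`, because the vectors `u ⊗ v` span `F⁴`. In `E₂(0)` the only nonzero product of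
basis vectors is `e₁ · e₁ = w`, where `w = e₁ + e₂`. If `D e₁ = a e₁ + c e₂` and
`D e₂ = b e₁ + d e₂`, the Leibniz rule on `e₁ · e₁` reads `D w = 2 a w`, and on `e₁ · e₂` it reads
`b w = 0`. Hence `b = 0`, `a = a + b = 2 a` gives `a = 0`, and `c + d = 2 a = 0`.
-/

section Product

variable [CommRing F]

/-- The tensor product `u ⊗ v` of two vectors, as a column of length `4` in the row-major order
used by `kron`. Since `Matrix.vec` stacks columns, it is the vectorization of `v uᵀ`. -/
def kronVec (u v : Fin 2 → F) : Fin 4 → F :=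
  vec (vecMulVec v u) ∘ (finProdFinEquiv (m := 2) (n := 2)).symm

/-- The product `u · v = E (u ⊗ v)` of the algebra with matrix of structure constants `E`. -/
def mscMul (E : Matrix (Fin 2) (Fin 4) F) (u v : Fin 2 → F) : Fin 2 → F :=
  E *ᵥ kronVec u v

/-- The matrix of structure constants of the algebra in which `e₁ · e₁ = w` and all other products
of basis vectors vanish. -/
def squareMSC (w : Fin 2 → F) : Matrix (Fin 2) (Fin 4) F :=
  !![w 0, 0, 0, 0; w 1, 0, 0, 0]

theorem kronVec_eq (u v : Fin 2 → F) :
    kronVec u v = ![u 0 * v 0, u 0 * v 1, u 1 * v 0, u 1 * v 1] := by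
  ext k
  fin_cases k <;> exact mul_comm (v _) (u _)

theorem kron_mulVec_kronVec (g h : Matrix (Fin 2) (Fin 2) F) (u v : Fin 2 → F) :
    kron g h *ᵥ kronVec u v = kronVec (g *ᵥ u) (h *ᵥ v) := by
  rw [kron, kronVec, kronVec, reindex_apply, submatrix_mulVec_equiv, Equiv.symm_symm,
    Function.comp_assoc, Equiv.symm_comp_self, Function.comp_id, kronecker_mulVec_vec,
    mul_vecMulVec, vecMulVec_mul, vecMul_transpose]

theorem kronVec_single_single (i j : Fin 2) :
    kronVec (Pi.single i (1 : F)) (Pi.single j 1) = Pi.single (finProdFinEquiv (i, j)) 1 := by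
  rw [kronVec, ← single_eq_single_vecMulVec_single, vec_single]
  exact Pi.single_comp_equiv finProdFinEquiv.symm _ _

theorem ext_iff_mulVec_kronVec {m : Type*} {A B : Matrix m (Fin 4) F} :
    A = B ↔ ∀ u v, A *ᵥ kronVec u v = B *ᵥ kronVec u v := by
  refine ⟨fun h _ _ ↦ by rw [h], fun h ↦ ext_of_mulVec_single fun k ↦ ?_⟩
  obtain ⟨⟨i, j⟩, rfl⟩ := (finProdFinEquiv (m := 2) (n := 2)).surjective k
  simpa only [kronVec_single_single] using h (Pi.single i 1) (Pi.single j 1)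

theorem mscMul_squareMSC (w u v : Fin 2 → F) :
    mscMul (squareMSC w) u v = (u 0 * v 0) • w := by
  ext k
  fin_cases k <;> simp [mscMul, squareMSC, kronVec_eq, mul_comm]

end Product

section Derivation

variable [Field F]

theorem mem_der_iff_leibniz {E : Matrix (Fin 2) (Fin 4) F} {D : Matrix (Fin 2) (Fin 2) F} :
    D ∈ Der E ↔
      ∀ u v, mscMul E (D *ᵥ u) v + mscMul E u (D *ᵥ v) = D *ᵥ mscMul E u v := by
  simp only [Der, Set.mem_ofPred_eq, ext_iff_mulVec_kronVec, mscMul, ← mulVec_mulVec,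
    add_mulVec, mulVec_add, kron_mulVec_kronVec, one_mulVec]

theorem mem_der_squareMSC_iff {w : Fin 2 → F} {D : Matrix (Fin 2) (Fin 2) F} :
    D ∈ Der (squareMSC w) ↔ D *ᵥ w = (2 * D 0 0) • w ∧ D 0 1 • w = 0 := by
  simp only [mem_der_iff_leibniz, mscMul_squareMSC, mulVec_smul]
  constructor
  · intro leibniz
    have on_e₁_e₁ := leibniz (Pi.single 0 1) (Pi.single 0 1)
    have on_e₁_e₂ := leibniz (Pi.single 0 1) (Pi.single 1 1)
    constructor
    · simpa [two_mul, add_smul] using on_e₁_e₁.symm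
    · simpa using on_e₁_e₂
  · rintro ⟨hw, hb⟩ u v
    calc ((D *ᵥ u) 0 * v 0) • w + (u 0 * (D *ᵥ v) 0) • w
        = (u 0 * v 0) • (2 * D 0 0) • w + (u 1 * v 0 + u 0 * v 1) • D 0 1 • w := by
          simp only [mulVec_eq_sum, Fin.sum_univ_two, Pi.add_apply, Pi.smul_apply, op_smul_eq_smul,
            transpose_apply, smul_eq_mul]
          module
      _ = (u 0 * v 0) • D *ᵥ w := by rw [hb, smul_zero, add_zero, hw]

end Derivation

theorem der_E2_zero_general (F : Type*) [Field F] :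
    Der (!![1, 0, 0, 0; 1, 0, 0, 0] : Matrix (Fin 2) (Fin 4) F) =
      {D | ∃ t : F, D = !![0, 0; t, -t]} := by
  ext D
  have mem_iff : D ∈ Der !![1, 0, 0, 0; 1, 0, 0, 0] ↔
      D *ᵥ 1 = (2 * D 0 0) • (1 : Fin 2 → F) ∧ D 0 1 • (1 : Fin 2 → F) = 0 :=
    mem_der_squareMSC_iff (w := 1)
  rw [mem_iff, Set.mem_ofPred_eq]
  constructor
  · rintro ⟨hw, hb⟩
    have b_eq : D 0 1 = 0 := by simpa using congrFun hb 0
    have row₀ : D 0 0 + D 0 1 = 2 * D 0 0 := by simpa [mulVec, dotProduct] using congrFun hw 0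
    have row₁ : D 1 0 + D 1 1 = 2 * D 0 0 := by simpa [mulVec, dotProduct] using congrFun hw 1
    have a_eq : D 0 0 = 0 := by linear_combination b_eq - row₀
    have d_eq : D 1 1 = -D 1 0 := by linear_combination row₁ + 2 * a_eq
    exact ⟨D 1 0, by rw [eta_fin_two D]; simp [a_eq, b_eq, d_eq]⟩
  · rintro ⟨t, rfl⟩
    simp [funext_iff, dotProduct]

theorem der_E2_zero (F : Type*) [Field F] [IsAlgClosed F]
    (h2 : ringChar F ≠ 2) (h3 : ringChar F ≠ 3) :
    Der (!![1, 0, 0, 0; 1, 0, 0, 0] : Matrix (Fin 2) (Fin 4) F) =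
      {D | ∃ t : F, D = !![0, 0; t, -t]} := by
  exact der_E2_zero_general F
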